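/- arXiv:1905.08852 — 7 statements merged into one kernel-verified Lean document; each statement's English description precedes it below -/
import Mathlib

section
/- Let V : ℝ → ℝ be continuous, let E ∈ ℝ, and let ψ : ℝ → ℝ be twice continuously differentiable with ψ(x) > 0 for all x, satisfying the eigenvalue equation −ψ''(x) + V(x)ψ(x) = E·ψ(x) for all x, and such that ψ(x) → 0 and ψ'(x) → 0 as x → ±∞. Let φ : ℝ → ℝ be twice continuously differentiable and nonnegative, vanishing only on a set of isolated points, such that the functions x ↦ ψ(x)φ(x) and x ↦ ψ(x)·(−φ''(x) + V(x)φ(x)) are integrable on ℝ, ∫ ψφ > 0, and ψ(x)φ'(x) − ψ'(x)φ(x) → 0 as x → ±∞. Then for any real numbers m and M such that m ≤ (−φ''(x) + V(x)φ(x))/φ(x) ≤ M for every x with φ(x) ≠ 0, one has m ≤ E ≤ M. -/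
open Filter MeasureTheory

/-- Ground-state local energy theorem: for `H = -d²/dx² + V` with positive
eigenfunction `ψ` of eigenvalue `E`, and a nonnegative trial function `φ`
vanishing only at isolated points, any bounds `m ≤ (Hφ)/φ ≤ M` (at points
where `φ ≠ 0`) imply `m ≤ E ≤ M`. -/
theorem ground_state_local_energy
    (V : ℝ → ℝ) (hV : Continuous V) (E : ℝ) (ψ : ℝ → ℝ)
    (hψC2 : ContDiff ℝ 2 ψ)
    (hψpos : ∀ x, 0 < ψ x)
    (hψeq : ∀ x, -(deriv (deriv ψ) x) + V x * ψ x = E * ψ x)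
    (hψtop : Tendsto ψ atTop (nhds 0)) (hψbot : Tendsto ψ atBot (nhds 0))
    (hψ'top : Tendsto (deriv ψ) atTop (nhds 0))
    (hψ'bot : Tendsto (deriv ψ) atBot (nhds 0))
    (φ : ℝ → ℝ) (hφC2 : ContDiff ℝ 2 φ)
    (hφnn : ∀ x, 0 ≤ φ x)
    (hφiso : ∀ x, φ x = 0 → ∃ ε > 0, ∀ y, y ≠ x → |y - x| < ε → φ y ≠ 0)
    (hint1 : Integrable (fun x => ψ x * φ x))
    (hint2 : Integrable (fun x => ψ x * (-(deriv (deriv φ) x) + V x * φ x)))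
    (hpos : 0 < ∫ x, ψ x * φ x)
    (hWtop : Tendsto (fun x => ψ x * deriv φ x - deriv ψ x * φ x) atTop (nhds 0))
    (hWbot : Tendsto (fun x => ψ x * deriv φ x - deriv ψ x * φ x) atBot (nhds 0))
    (m M : ℝ)
    (hm : ∀ x, φ x ≠ 0 → m ≤ (-(deriv (deriv φ) x) + V x * φ x) / φ x)
    (hM : ∀ x, φ x ≠ 0 → (-(deriv (deriv φ) x) + V x * φ x) / φ x ≤ M) :
    m ≤ E ∧ E ≤ M := by
  have hψd : ∀ x, HasDerivAt ψ (deriv ψ x) x := fun x =>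
    (hψC2.differentiable (by norm_num) x).hasDerivAt
  have hφd : ∀ x, HasDerivAt φ (deriv φ x) x := fun x =>
    (hφC2.differentiable (by norm_num) x).hasDerivAt
  have hψ1 : ContDiff ℝ 1 (deriv ψ) :=
    ((contDiff_succ_iff_deriv (n := 1)).1 (by simpa [one_add_one_eq_two] using hψC2)).2.2
  have hφ1 : ContDiff ℝ 1 (deriv φ) :=
    ((contDiff_succ_iff_deriv (n := 1)).1 (by simpa [one_add_one_eq_two] using hφC2)).2.2
  have hψdd : ∀ x, HasDerivAt (deriv ψ) (deriv (deriv ψ) x) x := fun x =>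
    (hψ1.differentiable (by norm_num) x).hasDerivAt
  have hφdd : ∀ x, HasDerivAt (deriv φ) (deriv (deriv φ) x) x := fun x =>
    (hφ1.differentiable (by norm_num) x).hasDerivAt
  have hφ2 : Continuous (deriv (deriv φ)) := hφ1.continuous_deriv (by norm_num)
  have hφc : Continuous φ := hφC2.continuous
  have hW : ∀ x, HasDerivAt (fun x => ψ x * deriv φ x - deriv ψ x * φ x)
      (E * (ψ x * φ x) - ψ x * (-(deriv (deriv φ) x) + V x * φ x)) x := by
    intro x
    have h := ((hψd x).mul (hφdd x)).sub ((hψdd x).mul (hφd x))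
    refine h.congr_deriv ?_
    linear_combination (φ x) * hψeq x
  have hI := integral_of_hasDerivAt_of_tendsto hW ((hint1.const_mul E).sub hint2) hWbot hWtop
  rw [integral_sub (hint1.const_mul E) hint2, integral_const_mul] at hI
  have hdense : Dense {x | φ x ≠ 0} := by
    intro x
    by_cases hx : φ x = 0
    · obtain ⟨ε, hε, h⟩ := hφiso x hx
      rw [Metric.mem_closure_iff]
      intro δ hδ
      have h0 : 0 < min ε δ := lt_min hε hδ
      have h1 : min ε δ ≤ ε := min_le_left _ _
      have h2 : min ε δ ≤ δ := min_le_right _ _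
      have h3 : |min ε δ / 2| = min ε δ / 2 := abs_of_pos (by linarith)
      refine ⟨x + min ε δ / 2, h _ (by linarith) ?_, ?_⟩
      · rw [add_sub_cancel_left, h3]; linarith
      · rw [dist_comm, Real.dist_eq, add_sub_cancel_left, h3]; linarith
    · exact subset_closure hx
  have hHc : Continuous (fun x => -(deriv (deriv φ) x) + V x * φ x) := by fun_prop
  have key1 : ∀ x, m * φ x ≤ -(deriv (deriv φ) x) + V x * φ x := by
    have hcl : IsClosed {x | m * φ x ≤ -(deriv (deriv φ) x) + V x * φ x} :=
      isClosed_le (by fun_prop) hHc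
    intro x
    refine hcl.closure_subset_iff.2 ?_ (hdense x)
    intro y hy
    exact (le_div_iff₀ (lt_of_le_of_ne (hφnn y) (Ne.symm hy))).1 (hm y hy)
  have key2 : ∀ x, -(deriv (deriv φ) x) + V x * φ x ≤ M * φ x := by
    have hcl : IsClosed {x | -(deriv (deriv φ) x) + V x * φ x ≤ M * φ x} :=
      isClosed_le hHc (by fun_prop)
    intro x
    refine hcl.closure_subset_iff.2 ?_ (hdense x)
    intro y hy
    exact (div_le_iff₀ (lt_of_le_of_ne (hφnn y) (Ne.symm hy))).1 (hM y hy)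
  have i1 := integral_mono (hint1.const_mul m) hint2 (fun x => by
    have := mul_le_mul_of_nonneg_left (key1 x) (hψpos x).le
    show m * (ψ x * φ x) ≤ _
    linarith)
  have i2 := integral_mono hint2 (hint1.const_mul M) (fun x => by
    have := mul_le_mul_of_nonneg_left (key2 x) (hψpos x).le
    show _ ≤ M * (ψ x * φ x)
    linarith)
  rw [integral_const_mul] at i1 i2
  constructor
  · exact le_of_mul_le_mul_right (by linarith) hpos
  · exact le_of_mul_le_mul_right (by linarith) hpos
end

section
/- Let V : ℝ → ℝ be continuous, E ∈ ℝ, n ∈ ℕ, and let ψ : ℝ → ℝ be twice continuously differentiable, square-integrable, with ψ(x) → 0 and ψ'(x) → 0 as x → ±∞, satisfying −ψ'' + Vψ = Eψ, and having exactly n zeros y₁ < ⋯ < yₙ, each simple (ψ'(yᵢ) ≠ 0), with ψ changing sign at each yᵢ. Let φ : ℝ → ℝ be twice continuously differentiable, vanishing only at isolated points, with exactly n sign changes: there exist z₁ < ⋯ < zₙ such that (−1)^i·φ(x) ≥ 0 for all x in the interval (zᵢ, zᵢ₊₁) for i = 0, …, n (with z₀ = −∞, zₙ₊₁ = +∞).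 Assume the functions ψφ and ψ·(−φ'' + Vφ) are integrable on ℝ and ψ(x)φ'(x) − ψ'(x)φ(x) → 0 as x → ±∞. Then for every real m with m ≤ (−φ''(x) + V(x)φ(x))/φ(x) for all x with φ(x) ≠ 0, one has m ≤ E. -/
open Filter MeasureTheory

theorem core_aux (V : ℝ → ℝ) (hV : Continuous V) (E m : ℝ) (I : Set ℝ)
    (hIo : IsOpen I) (hIc : I.OrdConnected) (x0 : ℝ) (hx0 : x0 ∈ I)
    (p p1 p2 f f1 f2 : ℝ → ℝ)
    (hp : ∀ x, HasDerivAt p (p1 x) x) (hp1 : ∀ x, HasDerivAt p1 (p2 x) x)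
    (hf : ∀ x, HasDerivAt f (f1 x) x) (hf1 : ∀ x, HasDerivAt f1 (f2 x) x)
    (hf2 : Continuous f2)
    (heq : ∀ x, -(p2 x) + V x * p x = E * p x)
    (hiso : ∀ x, f x = 0 → ∃ ε > 0, ∀ z, z ≠ x → |z - x| < ε → f z ≠ 0)
    (hWtop : Tendsto (fun x => p x * f1 x - p1 x * f x) atTop (nhds 0))
    (hWbot : Tendsto (fun x => p x * f1 x - p1 x * f x) atBot (nhds 0))
    (hm : ∀ x, f x ≠ 0 → m ≤ (-(f2 x) + V x * f x) / f x)
    (hpos : ∀ x ∈ I, 0 < p x) (hnn : ∀ x ∈ I, 0 ≤ f x)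
    (hL : ∀ x ∈ I, Set.Iic x ⊆ I ∨ ∃ a < x, p a = 0 ∧ Set.Ioc a x ⊆ I)
    (hR : ∀ x ∈ I, Set.Ici x ⊆ I ∨ ∃ b > x, p b = 0 ∧ Set.Ico x b ⊆ I) :
    m ≤ E := by
  by_contra hlt
  push Not at hlt
  have hfc : Continuous f := continuous_iff_continuousAt.2 fun x => (hf x).continuousAt
  have hne : ∀ x, ∀ᶠ t in nhdsWithin x {x}ᶜ, f t ≠ 0 := by
    intro x
    by_cases h0 : f x = 0
    · obtain ⟨ε, hε, h⟩ := hiso x h0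
      rw [eventually_nhdsWithin_iff]
      filter_upwards [Metric.ball_mem_nhds x hε] with t ht htx
      exact h t htx (by simpa [Real.dist_eq] using ht)
    · exact (hfc.continuousAt.eventually_ne h0).filter_mono nhdsWithin_le_nhds
  have hH : ∀ x ∈ I, 0 ≤ -(f2 x) + V x * f x - m * f x := by
    intro x hx
    have hc : Continuous fun x => -(f2 x) + V x * f x - m * f x := by fun_prop
    refine ge_of_tendsto (hc.continuousAt.tendsto.mono_left
      (nhdsWithin_le_nhds (s := {x}ᶜ))) ?_
    filter_upwards [hne x, nhdsWithin_le_nhds (hIo.mem_nhds hx)] with t ht htI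
    have h1 : 0 < f t := lt_of_le_of_ne (hnn t htI) (Ne.symm ht)
    have := (le_div_iff₀ h1).1 (hm t ht)
    linarith
  set W : ℝ → ℝ := fun x => p x * f1 x - p1 x * f x with hWdef
  have hW : ∀ x, HasDerivAt W (p x * f2 x - p2 x * f x) x := by
    intro x
    have := ((hp x).mul (hf1 x)).sub ((hp1 x).mul (hf x))
    refine this.congr_deriv ?_
    ring
  have hWc : Continuous W := continuous_iff_continuousAt.2 fun x => (hW x).continuousAt
  have hW' : ∀ x ∈ I, p x * f2 x - p2 x * f x ≤ -((m - E) * (p x * f x)) := by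
    intro x hx
    have h1 := mul_nonneg (hpos x hx).le (hH x hx)
    have h2 : p2 x = V x * p x - E * p x := by linarith [heq x]
    rw [h2]
    nlinarith
  have hW0 : ∀ x ∈ I, deriv W x ≤ 0 := by
    intro x hx
    rw [(hW x).deriv]
    have := mul_nonneg (sub_pos.2 hlt).le (mul_nonneg (hpos x hx).le (hnn x hx))
    linarith [hW' x hx]
  have hanti : ∀ a b, a ≤ b → Set.Ioo a b ⊆ I → W b ≤ W a := by
    intro a b hab hs
    have := antitoneOn_of_deriv_nonpos (convex_Icc a b) hWc.continuousOn
      (fun x _ => (hW x).differentiableAt.differentiableWithinAt)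
      (fun x hx => hW0 x (hs (by simpa using hx)))
    exact this (Set.left_mem_Icc.2 hab) (Set.right_mem_Icc.2 hab) hab
  have hle : ∀ x ∈ I, W x ≤ 0 := by
    intro x hx
    rcases hL x hx with h | ⟨a, hax, ha, h⟩
    · refine ge_of_tendsto hWbot ?_
      filter_upwards [eventually_le_atBot x] with t ht
      exact hanti t x ht (fun u hu => h hu.2.le)
    · have h1 := hanti a x hax.le (fun u hu => h ⟨hu.1, hu.2.le⟩)
      have hev : ∀ᶠ t in nhdsWithin a (Set.Ioi a), t ∈ Set.Ioc a x := Ioc_mem_nhdsGT hax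
      have h2 : 0 ≤ f a := by
        refine ge_of_tendsto (hfc.continuousAt.tendsto.mono_left
          (nhdsWithin_le_nhds (s := Set.Ioi a))) ?_
        filter_upwards [hev] with t ht using hnn t (h ht)
      have h3 : 0 ≤ p1 a := by
        have hs := (hasDerivWithinAt_iff_tendsto_slope' (s := Set.Ioi a) (by simp)).1
          (hp a).hasDerivWithinAt
        refine ge_of_tendsto hs ?_
        filter_upwards [hev] with t ht
        rw [slope_def_field, ha]
        exact div_nonneg (by linarith [hpos t (h ht)]) (by linarith [ht.1])
      have h4 : W a = -(p1 a * f a) := by simp [hWdef, ha]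
      nlinarith [mul_nonneg h3 h2]
  have hge : ∀ x ∈ I, 0 ≤ W x := by
    intro x hx
    rcases hR x hx with h | ⟨a, hax, ha, h⟩
    · refine le_of_tendsto hWtop ?_
      filter_upwards [eventually_ge_atTop x] with t ht
      exact hanti x t ht (fun u hu => h hu.1.le)
    · have h1 := hanti x a hax.le (fun u hu => h ⟨hu.1.le, hu.2⟩)
      have hev : ∀ᶠ t in nhdsWithin a (Set.Iio a), t ∈ Set.Ico x a := Ico_mem_nhdsLT hax
      have h2 : 0 ≤ f a := by
        refine ge_of_tendsto (hfc.continuousAt.tendsto.mono_left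
          (nhdsWithin_le_nhds (s := Set.Iio a))) ?_
        filter_upwards [hev] with t ht using hnn t (h ht)
      have h3 : p1 a ≤ 0 := by
        have hs := (hasDerivWithinAt_iff_tendsto_slope' (s := Set.Iio a) (by simp)).1
          (hp a).hasDerivWithinAt
        refine le_of_tendsto hs ?_
        filter_upwards [hev] with t ht
        rw [slope_def_field, ha]
        exact div_nonpos_of_nonneg_of_nonpos (by linarith [hpos t (h ht)]) (by linarith [ht.2])
      have h4 : W a = -(p1 a * f a) := by simp [hWdef, ha]
      nlinarith [mul_nonneg (neg_nonneg.2 h3) h2]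
  have hzero : ∀ x ∈ I, f x = 0 := by
    intro x hx
    have h1 : W =ᶠ[nhds x] fun _ => 0 := by
      filter_upwards [hIo.mem_nhds hx] with t ht
      exact le_antisymm (hle t ht) (hge t ht)
    have h2 : deriv W x = 0 := by rw [h1.deriv_eq]; simp
    rw [(hW x).deriv] at h2
    have h3 := hW' x hx
    rw [h2] at h3
    by_contra hfx
    have h4 : 0 < f x := lt_of_le_of_ne (hnn x hx) (Ne.symm hfx)
    have := mul_pos (sub_pos.2 hlt) (mul_pos (hpos x hx) h4)
    linarith
  have hev : ∀ᶠ t in nhdsWithin x0 {x0}ᶜ, False := by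
    filter_upwards [hne x0, nhdsWithin_le_nhds (hIo.mem_nhds hx0)] with t ht htI
    exact ht (hzero t htI)
  exact hev.exists.elim fun _ h => h

theorem index_aux (n : ℕ) (z : Fin n → ℝ) (hz : StrictMono z) (x : ℝ) :
    ∃ k : Fin (n + 1), ∀ j : Fin n, z j < x ↔ (j : ℕ) < (k : ℕ) := by
  classical
  have hex : ∃ k : ℕ, ∀ j : Fin n, z j < x → (j : ℕ) < k := ⟨n, fun j _ => j.2⟩
  have hk : Nat.find hex ≤ n := Nat.find_min' hex fun j _ => j.2
  refine ⟨⟨Nat.find hex, by omega⟩, fun j => ⟨Nat.find_spec hex j, fun hj => ?_⟩⟩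
  have := Nat.find_min hex hj
  push Not at this
  obtain ⟨j', h1, h2⟩ := this
  exact lt_of_le_of_lt (hz.monotone (Fin.le_def.2 h2)) h1

theorem sign_aux (I : Set ℝ) (hIc : I.OrdConnected) (p : ℝ → ℝ) (hp : Continuous p)
    (h : ∀ x ∈ I, p x ≠ 0) : ∃ s : ℝ, s ≠ 0 ∧ ∀ x ∈ I, 0 < s * p x := by
  by_cases hneg : ∃ x ∈ I, p x < 0
  · obtain ⟨x, hx, hpx⟩ := hneg
    refine ⟨-1, by norm_num, fun t ht => ?_⟩
    by_contra hc
    obtain ⟨u, hu, hu0⟩ := hIc.isPreconnected.intermediate_value hx ht hp.continuousOn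
      (show (0 : ℝ) ∈ Set.Icc (p x) (p t) from ⟨hpx.le, by linarith⟩)
    exact h u hu hu0
  · push Not at hneg
    exact ⟨1, one_ne_zero, fun t ht => by
      rw [one_mul]; exact lt_of_le_of_ne (hneg t ht) (Ne.symm (h t ht))⟩

/-- Barnsley's excited-state local energy theorem (lower bound): if `ψ` is an
eigenfunction of `H = -d²/dx² + V` with eigenvalue `E` having exactly `n` simple
zeros at each of which it changes sign, and `φ` is a trial function with exactly
`n` sign changes, then any lower bound `m` for the local energy `(Hφ)/φ` (over
points where `φ ≠ 0`) satisfies `m ≤ E`. -/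
theorem excited_state_local_energy_lower_bound
    (V : ℝ → ℝ) (hV : Continuous V) (E : ℝ) (n : ℕ) (ψ : ℝ → ℝ)
    (hψC2 : ContDiff ℝ 2 ψ)
    (hψL2 : Integrable (fun x => (ψ x) ^ 2))
    (hψtop : Tendsto ψ atTop (nhds 0)) (hψbot : Tendsto ψ atBot (nhds 0))
    (hψ'top : Tendsto (deriv ψ) atTop (nhds 0))
    (hψ'bot : Tendsto (deriv ψ) atBot (nhds 0))
    (hψeq : ∀ x, -(deriv (deriv ψ) x) + V x * ψ x = E * ψ x)
    -- ψ has exactly n zeros y₁ < ⋯ < yₙ, each simple, with a sign change at each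
    (y : Fin n → ℝ) (hy : StrictMono y)
    (hyzero : ∀ i, ψ (y i) = 0)
    (hyall : ∀ x, ψ x = 0 → ∃ i, x = y i)
    (hysimple : ∀ i, deriv ψ (y i) ≠ 0)
    (hysign : ∀ i, ∃ ε > 0, ∀ a b : ℝ,
      y i - ε < a → a < y i → y i < b → b < y i + ε → ψ a * ψ b < 0)
    -- φ vanishes only at isolated points and has exactly n sign changes
    (φ : ℝ → ℝ) (hφC2 : ContDiff ℝ 2 φ)
    (hφiso : ∀ x, φ x = 0 → ∃ ε > 0, ∀ z, z ≠ x → |z - x| < ε → φ z ≠ 0)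
    (z : Fin n → ℝ) (hz : StrictMono z)
    (hφsign : ∀ (i : Fin (n + 1)) (x : ℝ),
      (∀ j : Fin n, (j : ℕ) < (i : ℕ) → z j < x) →
      (∀ j : Fin n, (i : ℕ) ≤ (j : ℕ) → x < z j) →
      0 ≤ (-1 : ℝ) ^ (i : ℕ) * φ x)
    (hint1 : Integrable (fun x => ψ x * φ x))
    (hint2 : Integrable (fun x => ψ x * (-(deriv (deriv φ) x) + V x * φ x)))
    (hWtop : Tendsto (fun x => ψ x * deriv φ x - deriv ψ x * φ x) atTop (nhds 0))
    (hWbot : Tendsto (fun x => ψ x * deriv φ x - deriv ψ x * φ x) atBot (nhds 0))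
    (m : ℝ)
    (hm : ∀ x, φ x ≠ 0 → m ≤ (-(deriv (deriv φ) x) + V x * φ x) / φ x) :
    m ≤ E := by
  set I : Fin (n + 1) → Set ℝ := fun i =>
    {x | (∀ j : Fin n, (j : ℕ) < (i : ℕ) → y j < x) ∧
      (∀ j : Fin n, (i : ℕ) ≤ (j : ℕ) → x < y j)} with hI
  have hpig : ∃ i, ∀ j, z j ∉ I i := by
    by_contra hcon
    push Not at hcon
    choose g hg using hcon
    have hinj : Function.Injective g := by
      have key : ∀ a b : Fin (n + 1), (a : ℕ) < (b : ℕ) → g a ≠ g b := by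
        intro a b hab he
        have hb := b.2
        have h1 := (hg a).2 ⟨a, by omega⟩ le_rfl
        have h2 := (hg b).1 ⟨a, by omega⟩ hab
        rw [he] at h1
        exact lt_asymm h1 h2
      intro a b hab
      rcases lt_trichotomy (a : ℕ) (b : ℕ) with h | h | h
      · exact absurd hab (key a b h)
      · exact Fin.ext h
      · exact absurd hab.symm (key b a h)
    have := Fintype.card_le_of_injective g hinj
    simp at this
  obtain ⟨i, hi⟩ := hpig
  have hIo : IsOpen (I i) := by
    simp only [hI, Set.setOf_and, Set.setOf_forall]
    refine IsOpen.inter ?_ ?_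
    · exact isOpen_iInter_of_finite fun j => isOpen_iInter_of_finite fun _ =>
        isOpen_lt continuous_const continuous_id
    · exact isOpen_iInter_of_finite fun j => isOpen_iInter_of_finite fun _ =>
        isOpen_lt continuous_id continuous_const
  have hIc : (I i).OrdConnected := by
    refine ⟨fun a ha b hb t ht => ⟨fun j hj => ?_, fun j hj => ?_⟩⟩
    · exact lt_of_lt_of_le (ha.1 j hj) ht.1
    · exact lt_of_le_of_lt ht.2 (hb.2 j hj)
  have hIne : ∃ x0, x0 ∈ I i := by
    classical
    obtain ⟨x0, h1, h2⟩ := Order.exists_between_finsets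
      (lo := (Finset.univ.filter fun j : Fin n => (j : ℕ) < (i : ℕ)).image y)
      (hi := (Finset.univ.filter fun j : Fin n => (i : ℕ) ≤ (j : ℕ)).image y)
      (by
        intro a ha b hb
        simp only [Finset.mem_image, Finset.mem_filter, Finset.mem_univ, true_and] at ha hb
        obtain ⟨j, hj, rfl⟩ := ha
        obtain ⟨k, hk, rfl⟩ := hb
        exact hy (Fin.lt_def.2 (by omega)))
    refine ⟨x0, fun j hj => h1 _ ?_, fun j hj => h2 _ ?_⟩
    · exact Finset.mem_image_of_mem _ (by simpa using hj)
    · exact Finset.mem_image_of_mem _ (by simpa using hj)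
  obtain ⟨x0, hx0⟩ := hIne
  have hψne : ∀ x ∈ I i, ψ x ≠ 0 := by
    intro x hx h0
    obtain ⟨j, rfl⟩ := hyall x h0
    rcases lt_or_ge (j : ℕ) (i : ℕ) with h | h
    · exact lt_irrefl _ (hx.1 j h)
    · exact lt_irrefl _ (hx.2 j h)
  obtain ⟨s, hs0, hs⟩ := sign_aux (I i) hIc ψ hψC2.continuous hψne
  obtain ⟨k, hk⟩ := index_aux n z hz x0
  have hφnn : ∀ x ∈ I i, 0 ≤ (-1 : ℝ) ^ (k : ℕ) * φ x := by
    intro x hx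
    refine hφsign k x (fun j hj => ?_) (fun j hj => ?_)
    · have h1 := (hk j).2 hj
      by_contra hc
      exact hi j (hIc.out hx hx0 ⟨not_lt.1 hc, h1.le⟩)
    · have h1 : ¬ z j < x0 := fun h => by have := (hk j).1 h; omega
      by_contra hc
      exact hi j (hIc.out hx0 hx ⟨not_lt.1 h1, not_lt.1 hc⟩)
  have hc0 : ((-1 : ℝ) ^ (k : ℕ)) ≠ 0 := pow_ne_zero _ (by norm_num)
  generalize ((-1 : ℝ) ^ (k : ℕ)) = c at hφnn hc0
  have hd : ∀ f : ℝ → ℝ, ContDiff ℝ 2 f → (∀ x, HasDerivAt f (deriv f x) x) ∧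
      (∀ x, HasDerivAt (deriv f) (deriv (deriv f) x) x) ∧ Continuous (deriv (deriv f)) := by
    intro f hf
    have h1 : ContDiff ℝ 1 (deriv f) := hf.deriv'
    exact ⟨fun x => (hf.differentiable (by norm_num) x).hasDerivAt,
      fun x => (h1.differentiable (by norm_num) x).hasDerivAt, h1.continuous_deriv le_rfl⟩
  obtain ⟨hp, hp1, -⟩ := hd ψ hψC2
  obtain ⟨hf, hf1, hf2⟩ := hd φ hφC2
  have hWeq : (fun x => s * ψ x * (c * deriv φ x) - s * deriv ψ x * (c * φ x)) =
      fun x => (s * c) * (ψ x * deriv φ x - deriv ψ x * φ x) := by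
    funext x; ring
  refine core_aux V hV E m (I i) hIo hIc x0 hx0 (fun x => s * ψ x) (fun x => s * deriv ψ x)
    (fun x => s * deriv (deriv ψ) x) (fun x => c * φ x) (fun x => c * deriv φ x)
    (fun x => c * deriv (deriv φ) x) (fun x => (hp x).const_mul s) (fun x => (hp1 x).const_mul s)
    (fun x => (hf x).const_mul c) (fun x => (hf1 x).const_mul c) (hf2.const_mul c)
    (fun x => by linear_combination s * hψeq x) ?_ ?_ ?_ ?_ hs hφnn ?_ ?_
  · intro x hx
    obtain ⟨ε, hε, h⟩ := hφiso x ((mul_eq_zero.1 hx).resolve_left hc0)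
    exact ⟨ε, hε, fun t h1 h2 => mul_ne_zero hc0 (h t h1 h2)⟩
  · rw [hWeq]; simpa using hWtop.const_mul (s * c)
  · rw [hWeq]; simpa using hWbot.const_mul (s * c)
  · intro x hx
    have h := hm x (right_ne_zero_of_mul hx)
    have he : -(c * deriv (deriv φ) x) + V x * (c * φ x) =
      c * (-(deriv (deriv φ) x) + V x * φ x) := by ring
    simp only [he]
    rwa [mul_div_mul_left _ _ hc0]
  · intro x hx
    rcases Nat.eq_zero_or_pos (i : ℕ) with h | h
    · left
      intro t ht
      exact ⟨fun j hj => by omega, fun j hj => lt_of_le_of_lt ht (hx.2 j hj)⟩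
    · right
      have hi2 := i.2
      refine ⟨y ⟨i - 1, by omega⟩, hx.1 _ (show (i : ℕ) - 1 < (i : ℕ) by omega), by simp [hyzero], ?_⟩
      intro t ht
      refine ⟨fun j hj => lt_of_le_of_lt (hy.monotone (Fin.le_def.2 ?_)) ht.1,
        fun j hj => lt_of_le_of_lt ht.2 (hx.2 j hj)⟩
      show (j : ℕ) ≤ (i : ℕ) - 1
      omega
  · intro x hx
    rcases Nat.lt_or_ge (i : ℕ) n with h | h
    · right
      refine ⟨y ⟨i, h⟩, hx.2 _ le_rfl, by simp [hyzero], ?_⟩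
      intro t ht
      exact ⟨fun j hj => lt_of_lt_of_le (hx.1 j hj) ht.1,
        fun j hj => lt_of_lt_of_le ht.2 (hy.monotone (Fin.le_def.2 hj))⟩
    · left
      intro t ht
      exact ⟨fun j hj => lt_of_lt_of_le (hx.1 j hj) ht, fun j hj => by omega⟩
end

section
/- Let h : ℝ → ℝ be continuous, let g : ℝ → ℝ be convex, differentiable, and strictly monotone increasing, and set f = g ∘ h. Let v > 0, u > 0, ε ∈ ℝ, E ∈ ℝ, n ∈ ℕ. Let φ : ℝ → ℝ be twice continuously differentiable, square-integrable, with φ(x) → 0 and φ'(x) → 0 as x → ±∞, satisfying −φ'' + u·h·φ = ε·φ, vanishing only at isolated points and having exactly n sign changes (there exist z₁ < ⋯ < zₙ with (−1)^i·φ ≥ 0 on (zᵢ, zᵢ₊₁), z₀ = −∞, zₙ₊₁ = +∞). Let ψ : ℝ → ℝ be twice continuously differentiable, square-integrable, with ψ(x) → 0 and ψ'(x) → 0 as x → ±∞, satisfying −ψ'' + v·f·ψ = E·ψ, having exactly n zeros, each simple, at each of which ψ changes sign. Assume ψφ and ψ·(−φ'' + v·f·φ) are integrable and ψφ' − ψ'φ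 → 0 at ±∞. Then for every real M such that (−φ''(x) + v·f(x)·φ(x))/φ(x) ≤ M for all x with φ(x) ≠ 0, one has E ≤ M. -/
open Filter MeasureTheory

lemma sl_deriv_nonneg_right (φ : ℝ → ℝ) (a d : ℝ) (hd : HasDerivAt φ d a) (h0 : φ a = 0)
    (hp : ∀ᶠ x in nhdsWithin a (Set.Ioi a), 0 ≤ φ x) : 0 ≤ d := by
  have h1 := (hasDerivWithinAt_iff_tendsto_slope' (by simp)).1 (hd.hasDerivWithinAt (s := Set.Ioi a))
  refine ge_of_tendsto h1 ?_
  filter_upwards [hp, self_mem_nhdsWithin] with x hx hxa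
  rw [slope_def_field, h0]
  have : a < x := hxa
  exact div_nonneg (by linarith) (by linarith)

lemma sl_deriv_nonpos_left (φ : ℝ → ℝ) (a d : ℝ) (hd : HasDerivAt φ d a) (h0 : φ a = 0)
    (hp : ∀ᶠ x in nhdsWithin a (Set.Iio a), 0 ≤ φ x) : d ≤ 0 := by
  have h1 := (hasDerivWithinAt_iff_tendsto_slope' (by simp)).1 (hd.hasDerivWithinAt (s := Set.Iio a))
  refine le_of_tendsto h1 ?_
  filter_upwards [hp, self_mem_nhdsWithin] with x hx hxa
  rw [slope_def_field, h0]
  have : x < a := hxa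
  exact div_nonpos_of_nonneg_of_nonpos (by linarith) (by linarith)

lemma sl_sturm (p q φ φ' ψ ψ' : ℝ → ℝ) (hpq : ∀ x, q x < p x)
    (hφ : ∀ x, HasDerivAt φ (φ' x) x) (hφ' : ∀ x, HasDerivAt φ' (p x * φ x) x)
    (hψ : ∀ x, HasDerivAt ψ (ψ' x) x) (hψ' : ∀ x, HasDerivAt ψ' (q x * ψ x) x)
    (I : Set ℝ) (hIo : IsOpen I) (hIc : I.OrdConnected)
    (hφI : ∀ x ∈ I, 0 ≤ φ x) (hψI : ∀ x ∈ I, 0 < ψ x)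
    (hne : ∃ x ∈ I, φ x ≠ 0)
    (hL : (∃ a, φ a = 0 ∧ (∀ x ∈ I, a < x ∧ Set.Ioc a x ⊆ I)) ∨
      ((∀ x ∈ I, Set.Iic x ⊆ I) ∧
        Tendsto (fun x => ψ x * φ' x - ψ' x * φ x) atBot (nhds 0)))
    (hR : (∃ b, φ b = 0 ∧ (∀ x ∈ I, x < b ∧ Set.Ico x b ⊆ I)) ∨
      ((∀ x ∈ I, Set.Ici x ⊆ I) ∧
        Tendsto (fun x => ψ x * φ' x - ψ' x * φ x) atTop (nhds 0))) : False := by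
  set W : ℝ → ℝ := fun x => ψ x * φ' x - ψ' x * φ x with hW
  have hWd : ∀ x, HasDerivAt W ((p x - q x) * (φ x * ψ x)) x := by
    intro x
    have := ((hψ x).mul (hφ' x)).sub ((hψ' x).mul (hφ x))
    exact this.congr_deriv (by ring)
  have hWc : Continuous W := continuous_iff_continuousAt.2 fun x => (hWd x).continuousAt
  have hφc : Continuous φ := continuous_iff_continuousAt.2 fun x => (hφ x).continuousAt
  have hψc : Continuous ψ := continuous_iff_continuousAt.2 fun x => (hψ x).continuousAt
  have mono : ∀ a b, a ≤ b → Set.Ioo a b ⊆ I → W a ≤ W b := by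
    intro a b hab hs
    have : MonotoneOn W (Set.Icc a b) := by
      apply monotoneOn_of_deriv_nonneg (convex_Icc a b) hWc.continuousOn
      · intro x _; exact (hWd x).differentiableAt.differentiableWithinAt
      · intro x hx
        rw [interior_Icc] at hx
        rw [(hWd x).deriv]
        exact mul_nonneg (by linarith [hpq x]) (mul_nonneg (hφI x (hs hx)) (hψI x (hs hx)).le)
    exact this (Set.left_mem_Icc.2 hab) (Set.right_mem_Icc.2 hab) hab
  have L : ∀ x ∈ I, 0 ≤ W x := by
    intro x hx
    rcases hL with ⟨a, ha, hI⟩ | ⟨hI, ht⟩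
    · obtain ⟨hax, hsub⟩ := hI x hx
      have ev : ∀ᶠ w in nhdsWithin a (Set.Ioi a), w ∈ I := by
        filter_upwards [Ioc_mem_nhdsGT hax] with w hw using hsub hw
      have h1 : 0 ≤ ψ a := ge_of_tendsto (hψc.continuousAt.tendsto.mono_left nhdsWithin_le_nhds)
        (ev.mono fun w hw => (hψI w hw).le)
      have h2 : 0 ≤ φ' a := sl_deriv_nonneg_right φ a _ (hφ a) ha (ev.mono fun w hw => hφI w hw)
      have h3 := mono a x hax.le (Set.Ioo_subset_Ioc_self.trans hsub)
      have h4 : W a = ψ a * φ' a := by simp [hW, ha]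
      have := mul_nonneg h1 h2
      linarith
    · refine le_of_tendsto ht ?_
      filter_upwards [eventually_le_atBot x] with w hw
      exact mono w x hw fun y hy => hI x hx hy.2.le
  have R : ∀ x ∈ I, W x ≤ 0 := by
    intro x hx
    rcases hR with ⟨a, ha, hI⟩ | ⟨hI, ht⟩
    · obtain ⟨hax, hsub⟩ := hI x hx
      have ev : ∀ᶠ w in nhdsWithin a (Set.Iio a), w ∈ I := by
        filter_upwards [Ico_mem_nhdsLT hax] with w hw using hsub hw
      have h1 : 0 ≤ ψ a := ge_of_tendsto (hψc.continuousAt.tendsto.mono_left nhdsWithin_le_nhds)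
        (ev.mono fun w hw => (hψI w hw).le)
      have h2 : φ' a ≤ 0 := sl_deriv_nonpos_left φ a _ (hφ a) ha (ev.mono fun w hw => hφI w hw)
      have h3 := mono x a hax.le (Set.Ioo_subset_Ico_self.trans hsub)
      have h4 : W a = ψ a * φ' a := by simp [hW, ha]
      have := mul_nonpos_of_nonneg_of_nonpos h1 h2
      linarith
    · refine ge_of_tendsto ht ?_
      filter_upwards [eventually_ge_atTop x] with w hw
      exact mono x w hw fun y hy => hI x hx hy.1.le
  obtain ⟨x, hx, hx0⟩ := hne
  have e : W =ᶠ[nhds x] fun _ => 0 := by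
    filter_upwards [hIo.mem_nhds hx] with w hw using le_antisymm (R w hw) (L w hw)
  have h0 : (p x - q x) * (φ x * ψ x) = 0 := by
    rw [← (hWd x).deriv, e.deriv_eq]; simp
  have : 0 < (p x - q x) * (φ x * ψ x) :=
    mul_pos (by linarith [hpq x]) (mul_pos (lt_of_le_of_ne (hφI x hx) hx0.symm) (hψI x hx))
  linarith


/-- Excited-state upper-bound local energy theorem (Theorem 4 of the paper):
if the trial function `φ` is an `n`-node eigenfunction of the base operator
`-d²/dx² + u·h` where `f = g ∘ h` with `g` convex and increasing, then any upper
bound `M` for the local energy `(-φ'' + v·f·φ)/φ` (over points where `φ ≠ 0`)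
satisfies `E ≤ M`, where `E` is the `n`-th eigenvalue of `-d²/dx² + v·f`. -/
theorem excited_state_local_energy_upper_bound
    (h g : ℝ → ℝ) (hh : Continuous h)
    (hgconv : ConvexOn ℝ Set.univ g) (hgdiff : Differentiable ℝ g)
    (hgmono : StrictMono g)
    (f : ℝ → ℝ) (hf : f = g ∘ h)
    (v u ε E : ℝ) (hv : 0 < v) (hu : 0 < u) (n : ℕ)
    -- φ : n-node eigenfunction of the base problem −φ'' + u·h·φ = ε·φ
    (φ : ℝ → ℝ) (hφC2 : ContDiff ℝ 2 φ)
    (hφL2 : Integrable (fun x => (φ x) ^ 2))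
    (hφtop : Tendsto φ atTop (nhds 0)) (hφbot : Tendsto φ atBot (nhds 0))
    (hφ'top : Tendsto (deriv φ) atTop (nhds 0))
    (hφ'bot : Tendsto (deriv φ) atBot (nhds 0))
    (hφeq : ∀ x, -(deriv (deriv φ) x) + u * h x * φ x = ε * φ x)
    (hφiso : ∀ x, φ x = 0 → ∃ δ > 0, ∀ w, w ≠ x → |w - x| < δ → φ w ≠ 0)
    (z : Fin n → ℝ) (hz : StrictMono z)
    (hφsign : ∀ (i : Fin (n + 1)) (x : ℝ),
      (∀ j : Fin n, (j : ℕ) < (i : ℕ) → z j < x) →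
      (∀ j : Fin n, (i : ℕ) ≤ (j : ℕ) → x < z j) →
      0 ≤ (-1 : ℝ) ^ (i : ℕ) * φ x)
    -- ψ : n-node eigenfunction of the target problem −ψ'' + v·f·ψ = E·ψ
    (ψ : ℝ → ℝ) (hψC2 : ContDiff ℝ 2 ψ)
    (hψL2 : Integrable (fun x => (ψ x) ^ 2))
    (hψtop : Tendsto ψ atTop (nhds 0)) (hψbot : Tendsto ψ atBot (nhds 0))
    (hψ'top : Tendsto (deriv ψ) atTop (nhds 0))
    (hψ'bot : Tendsto (deriv ψ) atBot (nhds 0))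
    (hψeq : ∀ x, -(deriv (deriv ψ) x) + v * f x * ψ x = E * ψ x)
    (y : Fin n → ℝ) (hy : StrictMono y)
    (hyzero : ∀ i, ψ (y i) = 0)
    (hyall : ∀ x, ψ x = 0 → ∃ i, x = y i)
    (hysimple : ∀ i, deriv ψ (y i) ≠ 0)
    (hysign : ∀ i, ∃ δ > 0, ∀ a b : ℝ,
      y i - δ < a → a < y i → y i < b → b < y i + δ → ψ a * ψ b < 0)
    (hint1 : Integrable (fun x => ψ x * φ x))
    (hint2 : Integrable (fun x => ψ x * (-(deriv (deriv φ) x) + v * f x * φ x)))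
    (hWtop : Tendsto (fun x => ψ x * deriv φ x - deriv ψ x * φ x) atTop (nhds 0))
    (hWbot : Tendsto (fun x => ψ x * deriv φ x - deriv ψ x * φ x) atBot (nhds 0))
    (M : ℝ)
    (hM : ∀ x, φ x ≠ 0 → (-(deriv (deriv φ) x) + v * f x * φ x) / φ x ≤ M) :
    E ≤ M := by
  clear hφL2 hψL2 hint1 hint2 hysimple hysign
  have hφd : ∀ x, HasDerivAt φ (deriv φ x) x := fun x =>
    ((hφC2.differentiable (by norm_num)) x).hasDerivAt
  have hψd : ∀ x, HasDerivAt ψ (deriv ψ x) x := fun x =>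
    ((hψC2.differentiable (by norm_num)) x).hasDerivAt
  have hφc : Continuous φ := hφC2.continuous
  have hψc : Continuous ψ := hψC2.continuous
  have hφ2 : ∀ x, HasDerivAt (deriv φ) ((u * h x - ε) * φ x) x := by
    intro x
    have h1 : ContDiff ℝ 1 (deriv φ) := ((contDiff_succ_iff_deriv (n := 1)).1 hφC2).2.2
    have := ((h1.differentiable (by norm_num)) x).hasDerivAt
    exact this.congr_deriv (by linarith [hφeq x])
  have hψ2 : ∀ x, HasDerivAt (deriv ψ) ((v * f x - E) * ψ x) x := by
    intro x
    have h1 : ContDiff ℝ 1 (deriv ψ) := ((contDiff_succ_iff_deriv (n := 1)).1 hψC2).2.2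
    have := ((h1.differentiable (by norm_num)) x).hasDerivAt
    exact this.congr_deriv (by linarith [hψeq x])
  have hfc : Continuous f := by rw [hf]; exact hgdiff.continuous.comp hh
  by_contra hEM
  push Not at hEM
  have hiso : ∀ x, ∀ᶠ w in nhdsWithin x {x}ᶜ, φ w ≠ 0 := by
    intro x
    by_cases hx : φ x = 0
    · obtain ⟨δ, hδ, H⟩ := hφiso x hx
      have : Metric.ball x δ ∈ nhdsWithin x {x}ᶜ :=
        mem_nhdsWithin_of_mem_nhds (Metric.ball_mem_nhds x hδ)
      filter_upwards [this, self_mem_nhdsWithin] with w hw hwx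
      exact H w hwx (by simpa [Real.dist_eq] using hw)
    · exact (hφc.continuousAt.eventually_ne hx).filter_mono nhdsWithin_le_nhds
  have hle0 : ∀ x, φ x ≠ 0 → v * f x - u * h x + ε ≤ M := by
    intro x hx
    have h1 := hM x hx
    have h2 : (-(deriv (deriv φ) x) + v * f x * φ x) / φ x = v * f x - u * h x + ε := by
      rw [div_eq_iff hx]; linarith [hφeq x]
    linarith
  have hle : ∀ x, v * f x - u * h x + ε ≤ M := by
    intro x
    have hc : Continuous fun x => v * f x - u * h x + ε := by fun_prop
    exact le_of_tendsto (hc.continuousAt.tendsto.mono_left nhdsWithin_le_nhds)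
      ((hiso x).mono fun w hw => hle0 w hw)
  have hpq : ∀ x, v * f x - E < u * h x - ε := fun x => by linarith [hle x]
  let I : Fin (n + 1) → Set ℝ := fun i =>
    {x | (∀ j : Fin n, (j : ℕ) < (i : ℕ) → z j < x) ∧ (∀ j : Fin n, (i : ℕ) ≤ (j : ℕ) → x < z j)}
  have evL : ∀ k : Fin n, ∀ᶠ x in nhdsWithin (z k) (Set.Iio (z k)), x ∈ I k.castSucc := by
    intro k
    have h1 : ∀ᶠ x in nhdsWithin (z k) (Set.Iio (z k)),
        ∀ j : Fin n, (j : ℕ) < (k : ℕ) → z j < x := by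
      refine eventually_all.2 fun j => ?_
      by_cases hjk : (j : ℕ) < (k : ℕ)
      · filter_upwards [mem_nhdsWithin_of_mem_nhds (Ioi_mem_nhds (hz (show j < k from hjk)))]
          with x hx _ using hx
      · exact Eventually.of_forall fun x hx => absurd hx hjk
    filter_upwards [h1, self_mem_nhdsWithin] with x hx hxk
    refine ⟨fun j hj => hx j hj, fun j hj => lt_of_lt_of_le hxk (hz.monotone (show k ≤ j from hj))⟩
  have evR : ∀ k : Fin n, ∀ᶠ x in nhdsWithin (z k) (Set.Ioi (z k)), x ∈ I k.succ := by
    intro k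
    have h1 : ∀ᶠ x in nhdsWithin (z k) (Set.Ioi (z k)),
        ∀ j : Fin n, (k : ℕ) < (j : ℕ) → x < z j := by
      refine eventually_all.2 fun j => ?_
      by_cases hjk : (k : ℕ) < (j : ℕ)
      · filter_upwards [mem_nhdsWithin_of_mem_nhds (Iio_mem_nhds (hz (show k < j from hjk)))]
          with x hx _ using hx
      · exact Eventually.of_forall fun x hx => absurd hx hjk
    filter_upwards [h1, self_mem_nhdsWithin] with x hx hxk
    refine ⟨fun j hj => ?_, fun j hj => hx j (by simp at hj; omega)⟩
    have hjk : j ≤ k := by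
      simp at hj; exact Fin.le_def.2 (by omega)
    exact lt_of_le_of_lt (hz.monotone hjk) hxk
  have hzz : ∀ k : Fin n, φ (z k) = 0 := by
    intro k
    have c1 : Continuous fun x => (-1 : ℝ) ^ ((k.castSucc : Fin (n+1)) : ℕ) * φ x := by fun_prop
    have c2 : Continuous fun x => (-1 : ℝ) ^ ((k.succ : Fin (n+1)) : ℕ) * φ x := by fun_prop
    have h1 := ge_of_tendsto (c1.continuousAt.tendsto.mono_left nhdsWithin_le_nhds)
      ((evL k).mono fun x hx => hφsign _ x hx.1 hx.2)
    have h2 := ge_of_tendsto (c2.continuousAt.tendsto.mono_left nhdsWithin_le_nhds)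
      ((evR k).mono fun x hx => hφsign _ x hx.1 hx.2)
    simp only [Fin.val_castSucc, Fin.val_succ, pow_succ] at h1 h2
    have h3 : (-1 : ℝ) ^ (k : ℕ) * φ (z k) = 0 := by linarith
    rcases mul_eq_zero.1 h3 with h4 | h4
    · exact absurd h4 (pow_ne_zero _ (by norm_num))
    · exact h4
  have hIo : ∀ i, IsOpen (I i) := by
    intro i
    have : I i = (⋂ j : Fin n, {x | (j : ℕ) < (i : ℕ) → z j < x}) ∩
        (⋂ j : Fin n, {x | (i : ℕ) ≤ (j : ℕ) → x < z j}) := by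
      ext x; simp [I]
    rw [this]
    refine IsOpen.inter (isOpen_iInter_of_finite fun j => ?_) (isOpen_iInter_of_finite fun j => ?_)
    · by_cases hj : (j : ℕ) < (i : ℕ)
      · simp only [hj, forall_const]; exact isOpen_Ioi
      · simp [hj]
    · by_cases hj : (i : ℕ) ≤ (j : ℕ)
      · simp only [hj, forall_const]; exact isOpen_Iio
      · simp [hj]
  have hIc : ∀ i, (I i).OrdConnected := by
    intro i
    refine ⟨fun a ha b hb x hx => ⟨fun j hj => (ha.1 j hj).trans_le hx.1,
      fun j hj => hx.2.trans_lt (hb.2 j hj)⟩⟩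
  have hIne : ∀ i, (I i).Nonempty := by
    intro i
    rcases Fin.eq_zero_or_eq_succ i with rfl | ⟨k, rfl⟩
    · have : ∀ᶠ x in (atBot : Filter ℝ), ∀ j : Fin n, x < z j :=
        eventually_all.2 fun j => eventually_lt_atBot _
      obtain ⟨x, hx⟩ := this.exists
      exact ⟨x, fun j hj => by simp at hj, fun j _ => hx j⟩
    · exact (evR k).exists
  have hIφ : ∀ i, ∃ x ∈ I i, φ x ≠ 0 := by
    intro i
    obtain ⟨x, hx⟩ := hIne i
    have h1 : ∀ᶠ w in nhdsWithin x {x}ᶜ, w ∈ I i :=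
      mem_nhdsWithin_of_mem_nhds ((hIo i).mem_nhds hx)
    exact (h1.and (hiso x)).exists
  have key : ∀ i, ∃ x ∈ I i, ψ x = 0 := by
    intro i
    by_contra hno
    push Not at hno
    obtain ⟨x0, hx0⟩ := hIne i
    have ht : ∃ t : ℝ, ∀ x ∈ I i, 0 < t * ψ x := by
      refine ⟨ψ x0, fun x hx => ?_⟩
      by_contra hneg
      push Not at hneg
      have hpos : 0 < ψ x0 * ψ x0 := mul_self_pos.2 (hno x0 hx0)
      have hc : ContinuousOn (fun x => ψ x0 * ψ x) (I i) := by fun_prop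
      obtain ⟨w, hw, hw0⟩ := (hIc i).isPreconnected.intermediate_value hx hx0 hc ⟨hneg, hpos.le⟩
      rcases mul_eq_zero.1 hw0 with h4 | h4
      · exact hno x0 hx0 h4
      · exact hno w hw h4
    obtain ⟨t, ht⟩ := ht
    have hs0 : (-1 : ℝ) ^ (i : ℕ) ≠ 0 := pow_ne_zero _ (by norm_num)
    generalize hs : (-1 : ℝ) ^ (i : ℕ) = s at hs0
    have hWeq : (fun x => t * ψ x * (s * deriv φ x) - t * deriv ψ x * (s * φ x)) =
        fun x => (t * s) * (ψ x * deriv φ x - deriv ψ x * φ x) := by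
      funext x; ring
    refine sl_sturm (fun x => u * h x - ε) (fun x => v * f x - E)
      (fun x => s * φ x) (fun x => s * deriv φ x) (fun x => t * ψ x) (fun x => t * deriv ψ x)
      hpq (fun x => (hφd x).const_mul s) (fun x => ?_) (fun x => (hψd x).const_mul t) (fun x => ?_)
      (I i) (hIo i) (hIc i) (fun x hx => ?_) ht ?_ ?_ ?_
    · exact ((hφ2 x).const_mul s).congr_deriv (by ring)
    · exact ((hψ2 x).const_mul t).congr_deriv (by ring)
    · rw [← hs]; exact hφsign i x hx.1 hx.2
    · obtain ⟨x, hx, hx'⟩ := hIφ i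
      exact ⟨x, hx, mul_ne_zero hs0 hx'⟩
    · rcases Fin.eq_zero_or_eq_succ i with rfl | ⟨k, rfl⟩
      · right
        refine ⟨fun x hx w hw => ⟨fun j hj => by simp at hj,
          fun j hj => lt_of_le_of_lt hw (hx.2 j hj)⟩, ?_⟩
        rw [hWeq]; simpa using hWbot.const_mul (t * s)
      · left
        refine ⟨z k, by simp [hzz k], fun x hx => ⟨hx.1 k (by simp), fun w hw => ?_⟩⟩
        refine ⟨fun j hj => ?_, fun j hj => lt_of_le_of_lt hw.2 (hx.2 j hj)⟩
        have hjk : j ≤ k := by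
          simp at hj; exact Fin.le_def.2 (by omega)
        exact lt_of_le_of_lt (hz.monotone hjk) hw.1
    · rcases Fin.eq_castSucc_or_eq_last i with ⟨k, rfl⟩ | rfl
      · left
        refine ⟨z k, by simp [hzz k], fun x hx => ⟨hx.2 k (by simp), fun w hw => ?_⟩⟩
        refine ⟨fun j hj => lt_of_lt_of_le (hx.1 j hj) hw.1, fun j hj => ?_⟩
        exact lt_of_lt_of_le hw.2 (hz.monotone (show k ≤ j from hj))
      · right
        refine ⟨fun x hx w hw => ⟨fun j hj => lt_of_lt_of_le (hx.1 j hj) hw,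
          fun j hj => absurd j.2 (by simp at hj; omega)⟩, ?_⟩
        rw [hWeq]; simpa using hWtop.const_mul (t * s)
  choose x hxI hx0 using key
  choose m hm using fun i => hyall (x i) (hx0 i)
  have hxlt : ∀ i j : Fin (n + 1), i < j → x i < x j := by
    intro i j hij
    have hi : (i : ℕ) < n := by have := j.2; have : (i : ℕ) < j := hij; omega
    exact ((hxI i).2 ⟨i, hi⟩ le_rfl).trans ((hxI j).1 ⟨i, hi⟩ hij)
  have hxinj : Function.Injective x := (show StrictMono x from fun i j => hxlt i j).injective
  have hminj : Function.Injective m := by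
    intro i j hij
    apply hxinj
    rw [hm i, hm j, hij]
  have := Fintype.card_le_of_injective m hminj
  simp at this
end

section
/- Let h : ℝ → ℝ be continuous, let g : ℝ → ℝ be convex, differentiable, and strictly monotone increasing, and set f = g ∘ h. Let v > 0, t ∈ ℝ, ε ∈ ℝ, and set u = v·g'(h(t)). Let φ : ℝ → ℝ be twice continuously differentiable, not identically zero, vanishing only at isolated points, and satisfying −φ''(x) + u·h(x)·φ(x) = ε·φ(x) for all x. Then the infimum, over all x with φ(x) ≠ 0, of the local energy (−φ''(x) + v·f(x)·φ(x))/φ(x) equals v·(g(h(t)) − g'(h(t))·h(t)) + ε. In particular, the local-energy lower bound obtained from the trial function φ coincides with the envelope-theory lower bound v·a(t) + ε, where a(t) = g(h(t)) − g'(h(t))·h(t). -/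
/-- Coincidence theorem (convex case): if `φ` is an eigenfunction of the base
operator `-d²/dx² + u·h` with eigenvalue `ε`, where `u = v·g'(h(t))` and
`f = g ∘ h` with `g` convex and increasing, then the infimum of the local energy
`(-φ'' + v·f·φ)/φ` over points where `φ ≠ 0` equals the envelope lower bound
`v·a(t) + ε` with `a(t) = g(h(t)) − g'(h(t))·h(t)`. -/
theorem local_energy_envelope_coincidence_convex
    (h g : ℝ → ℝ) (hh : Continuous h)
    (hgconv : ConvexOn ℝ Set.univ g) (hgdiff : Differentiable ℝ g)
    (hgmono : StrictMono g)
    (f : ℝ → ℝ) (hf : f = g ∘ h)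
    (v t ε : ℝ) (hv : 0 < v)
    (u : ℝ) (hu : u = v * deriv g (h t))
    (φ : ℝ → ℝ) (hφC2 : ContDiff ℝ 2 φ)
    (hφne : ∃ x, φ x ≠ 0)
    (hφiso : ∀ x, φ x = 0 → ∃ δ > 0, ∀ w, w ≠ x → |w - x| < δ → φ w ≠ 0)
    (hφeq : ∀ x, -(deriv (deriv φ) x) + u * h x * φ x = ε * φ x) :
    (⨅ x : {x : ℝ // φ x ≠ 0},
        (-(deriv (deriv φ) (x : ℝ)) + v * f (x : ℝ) * φ (x : ℝ)) / φ (x : ℝ)) =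
      v * (g (h t) - deriv g (h t) * h t) + ε := by
  have tang : ∀ a y : ℝ, g a + deriv g a * (y - a) ≤ g y := by
    intro a y
    rcases lt_trichotomy a y with hlt | heq | hgt
    · have := hgconv.le_slope_of_hasDerivAt (Set.mem_univ a) (Set.mem_univ y) hlt
        (hgdiff a).hasDerivAt
      rw [slope_def_field, le_div_iff₀ (by linarith)] at this
      linarith
    · subst heq; simp
    · have := hgconv.slope_le_of_hasDerivAt (Set.mem_univ y) (Set.mem_univ a) hgt
        (hgdiff a).hasDerivAt
      rw [slope_def_field, div_le_iff₀ (by linarith)] at this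
      linarith
  have key : ∀ x : {x : ℝ // φ x ≠ 0},
      (-(deriv (deriv φ) (x : ℝ)) + v * f (x : ℝ) * φ (x : ℝ)) / φ (x : ℝ)
        = v * g (h x) - u * h x + ε := by
    rintro ⟨x, hx⟩
    have e := hφeq x
    simp only
    rw [div_eq_iff hx, hf, Function.comp_apply]
    linarith
  simp only [key]
  obtain ⟨x₀, hx₀⟩ := hφne
  haveI : Nonempty {x : ℝ // φ x ≠ 0} := ⟨⟨x₀, hx₀⟩⟩
  apply ciInf_eq_of_forall_ge_of_forall_gt_exists_lt
  · rintro ⟨x, hx⟩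
    have := mul_le_mul_of_nonneg_left (tang (h t) (h x)) hv.le
    simp only
    rw [hu]
    linarith
  · intro w hw
    have hc : Continuous (fun x => v * g (h x) - u * h x + ε) := by
      have := hgdiff.continuous
      fun_prop
    have hFt : v * g (h t) - u * h t + ε < w := by rw [hu]; linarith
    by_cases h0 : φ t = 0
    · obtain ⟨δ, hδ, hiso⟩ := hφiso t h0
      obtain ⟨η, hη, hball⟩ := Metric.isOpen_iff.1 (isOpen_Iio.preimage hc) t
        (show t ∈ _ ⁻¹' Set.Iio w from hFt)
      have hm : 0 < min δ η := lt_min hδ hη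
      have habs : |t + min δ η / 2 - t| = min δ η / 2 := by
        rw [add_sub_cancel_left, abs_of_pos (by linarith)]
      refine ⟨⟨t + min δ η / 2, hiso _ (by linarith) ?_⟩, ?_⟩
      · rw [habs]; linarith [min_le_left δ η]
      · apply hball
        rw [Metric.mem_ball, Real.dist_eq, habs]; linarith [min_le_right δ η]
    · exact ⟨⟨t, h0⟩, hFt⟩
end

section
/- Let h : ℝ → ℝ be continuous, let g : ℝ → ℝ be concave, differentiable, and strictly monotone increasing, and set f = g ∘ h. Let v > 0, t ∈ ℝ, ε ∈ ℝ, and set u = v·g'(h(t)). Let φ : ℝ → ℝ be twice continuously differentiable, not identically zero, vanishing only at isolated points, and satisfying −φ''(x) + u·h(x)·φ(x) = ε·φ(x) for all x. Then the supremum, over all x with φ(x) ≠ 0, of the local energy (−φ''(x) + v·f(x)·φ(x))/φ(x) equals v·(g(h(t)) − g'(h(t))·h(t)) + ε. In particular, the local-energy upper bound obtained from the trial function φ coincides with the envelope-theory upper bound v·a(t) + ε, where a(t) = g(h(t)) − g'(h(t))·h(t). -/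
/-- Coincidence theorem (concave case): if `φ` is an eigenfunction of the base
operator `-d²/dx² + u·h` with eigenvalue `ε`, where `u = v·g'(h(t))` and
`f = g ∘ h` with `g` concave and increasing, then the supremum of the local
energy `(-φ'' + v·f·φ)/φ` over points where `φ ≠ 0` equals the envelope upper
bound `v·a(t) + ε` with `a(t) = g(h(t)) − g'(h(t))·h(t)`. -/
theorem local_energy_envelope_coincidence_concave
    (h g : ℝ → ℝ) (hh : Continuous h)
    (hgconc : ConcaveOn ℝ Set.univ g) (hgdiff : Differentiable ℝ g)
    (hgmono : StrictMono g)
    (f : ℝ → ℝ) (hf : f = g ∘ h)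
    (v t ε : ℝ) (hv : 0 < v)
    (u : ℝ) (hu : u = v * deriv g (h t))
    (φ : ℝ → ℝ) (hφC2 : ContDiff ℝ 2 φ)
    (hφne : ∃ x, φ x ≠ 0)
    (hφiso : ∀ x, φ x = 0 → ∃ δ > 0, ∀ w, w ≠ x → |w - x| < δ → φ w ≠ 0)
    (hφeq : ∀ x, -(deriv (deriv φ) x) + u * h x * φ x = ε * φ x) :
    (⨆ x : {x : ℝ // φ x ≠ 0},
        (-(deriv (deriv φ) (x : ℝ)) + v * f (x : ℝ) * φ (x : ℝ)) / φ (x : ℝ)) =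
      v * (g (h t) - deriv g (h t) * h t) + ε := by
  subst hf
  have tang : ∀ y, g y ≤ g (h t) + deriv g (h t) * (y - h t) := by
    intro y
    have hd : HasDerivAt g (deriv g (h t)) (h t) := (hgdiff (h t)).hasDerivAt
    rcases lt_trichotomy y (h t) with hlt | heq | hgt
    · have := hgconc.le_slope_of_hasDerivAt (Set.mem_univ _) (Set.mem_univ _) hlt hd
      rw [slope_def_field, le_div_iff₀ (by linarith)] at this
      linarith
    · simp [heq]
    · have := hgconc.slope_le_of_hasDerivAt (Set.mem_univ _) (Set.mem_univ _) hgt hd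
      rw [slope_def_field, div_le_iff₀ (by linarith)] at this
      linarith
  have key : ∀ x : {x : ℝ // φ x ≠ 0},
      (-(deriv (deriv φ) (x : ℝ)) + v * (g ∘ h) (x : ℝ) * φ (x : ℝ)) / φ (x : ℝ)
        = v * g (h x) - u * h x + ε := by
    rintro ⟨x, hx⟩
    rw [div_eq_iff hx]
    have := hφeq x
    simp only [Function.comp]
    linarith
  simp_rw [key]
  haveI : Nonempty {x : ℝ // φ x ≠ 0} := let ⟨x, hx⟩ := hφne; ⟨⟨x, hx⟩⟩
  apply ciSup_eq_of_forall_le_of_forall_lt_exists_gt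
  · intro x
    have := mul_le_mul_of_nonneg_left (tang (h x)) hv.le
    rw [hu]
    linarith
  · intro w hw
    have hc : Continuous fun x => v * g (h x) - u * h x + ε := by
      have := hgdiff.continuous
      fun_prop
    have hwt : w < v * g (h t) - u * h t + ε := by rw [hu]; linarith
    by_cases ht : φ t = 0
    · obtain ⟨δ, hδ, hne⟩ := hφiso t ht
      obtain ⟨r, hr, hball⟩ := Metric.isOpen_iff.1 (isOpen_lt continuous_const hc) t hwt
      have hm : 0 < min δ r := lt_min hδ hr
      have habs : |t + min δ r / 2 - t| = min δ r / 2 := by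
        rw [add_sub_cancel_left, abs_of_pos (by linarith)]
      refine ⟨⟨t + min δ r / 2, hne _ (by linarith) ?_⟩, ?_⟩
      · rw [habs]
        linarith [min_le_left δ r]
      · apply hball
        rw [Metric.mem_ball, Real.dist_eq, habs]
        linarith [min_le_right δ r]
    · exact ⟨⟨t, ht⟩, hwt⟩
end

section
/- Let h : ℝ → ℝ be continuous, let g : ℝ → ℝ be convex, differentiable, and strictly monotone increasing, and set f = g ∘ h. Let v > 0 and t ∈ ℝ. Let ψ : ℝ → ℝ be twice continuously differentiable, strictly positive, square-integrable, with ψ → 0 and ψ' → 0 at ±∞, satisfying −ψ'' + v·f·ψ = E·ψ. Let φ : ℝ → ℝ be twice continuously differentiable, strictly positive, square-integrable, with φ → 0 and φ' → 0 at ±∞, satisfying −φ'' + v·g'(h(t))·h·φ = ε·φ. Assume ψφ, ψ·h·φ, and ψ·f·φ are integrable and ψφ' − ψ'φ → 0 at ±∞. Then E ≥ v·(g(h(t)) − g'(h(t))·h(t)) + ε. -/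
open Filter MeasureTheory

/-- Envelope-theory lower bound for the ground state: with `f = g ∘ h`, `g`
convex and increasing, a positive eigenfunction `ψ` of `-d²/dx² + v·f` with
eigenvalue `E`, and a positive eigenfunction `φ` of the tangential base operator
`-d²/dx² + v·g'(h(t))·h` with eigenvalue `ε`, one has
`E ≥ v·(g(h(t)) − g'(h(t))·h(t)) + ε`. -/
theorem envelope_ground_state_lower_bound
    (h g : ℝ → ℝ) (hh : Continuous h)
    (hgconv : ConvexOn ℝ Set.univ g) (hgdiff : Differentiable ℝ g)
    (hgmono : StrictMono g)
    (f : ℝ → ℝ) (hf : f = g ∘ h)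
    (v t E ε : ℝ) (hv : 0 < v)
    (ψ : ℝ → ℝ) (hψC2 : ContDiff ℝ 2 ψ) (hψpos : ∀ x, 0 < ψ x)
    (hψL2 : Integrable (fun x => (ψ x) ^ 2))
    (hψtop : Tendsto ψ atTop (nhds 0)) (hψbot : Tendsto ψ atBot (nhds 0))
    (hψ'top : Tendsto (deriv ψ) atTop (nhds 0))
    (hψ'bot : Tendsto (deriv ψ) atBot (nhds 0))
    (hψeq : ∀ x, -(deriv (deriv ψ) x) + v * f x * ψ x = E * ψ x)
    (φ : ℝ → ℝ) (hφC2 : ContDiff ℝ 2 φ) (hφpos : ∀ x, 0 < φ x)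
    (hφL2 : Integrable (fun x => (φ x) ^ 2))
    (hφtop : Tendsto φ atTop (nhds 0)) (hφbot : Tendsto φ atBot (nhds 0))
    (hφ'top : Tendsto (deriv φ) atTop (nhds 0))
    (hφ'bot : Tendsto (deriv φ) atBot (nhds 0))
    (hφeq : ∀ x, -(deriv (deriv φ) x) + v * deriv g (h t) * h x * φ x = ε * φ x)
    (hint1 : Integrable (fun x => ψ x * φ x))
    (hint2 : Integrable (fun x => ψ x * h x * φ x))
    (hint3 : Integrable (fun x => ψ x * f x * φ x))
    (hWtop : Tendsto (fun x => ψ x * deriv φ x - deriv ψ x * φ x) atTop (nhds 0))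
    (hWbot : Tendsto (fun x => ψ x * deriv φ x - deriv ψ x * φ x) atBot (nhds 0)) :
    v * (g (h t) - deriv g (h t) * h t) + ε ≤ E := by
  by_contra hlt
  push Not at hlt
  have htan : ∀ y, g (h t) + deriv g (h t) * (y - h t) ≤ g y := by
    intro y
    rcases lt_trichotomy y (h t) with hy | hy | hy
    · have := hgconv.slope_le_deriv (Set.mem_univ y) (Set.mem_univ (h t)) hy (hgdiff _)
      rw [slope_def_field, div_le_iff₀ (by linarith)] at this
      linarith
    · simp [hy]
    · have := hgconv.deriv_le_slope (Set.mem_univ (h t)) (Set.mem_univ y) hy (hgdiff _)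
      rw [slope_def_field, le_div_iff₀ (by linarith)] at this
      linarith
  have hd1 : ∀ u : ℝ → ℝ, ContDiff ℝ 2 u → ∀ x, HasDerivAt u (deriv u x) x :=
    fun u hu x => (hu.differentiable (by norm_num) x).hasDerivAt
  have hd2 : ∀ u : ℝ → ℝ, ContDiff ℝ 2 u → ∀ x, HasDerivAt (deriv u) (deriv (deriv u) x) x := by
    intro u hu x
    have h2 : ContDiff ℝ (1 + 1) u := by
      rw [one_add_one_eq_two]
      exact hu
    exact ((contDiff_succ_iff_deriv.1 h2).2.2.differentiable (by norm_num) x).hasDerivAt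
  have hanti : StrictAnti (fun x => ψ x * deriv φ x - deriv ψ x * φ x) := by
    apply strictAnti_of_deriv_neg
    intro x
    have hD := ((hd1 ψ hψC2 x).mul (hd2 φ hφC2 x)).sub ((hd2 ψ hψC2 x).mul (hd1 φ hφC2 x))
    have hD' := hD.deriv
    refine lt_of_eq_of_lt hD' ?_
    have e1 : deriv (deriv φ) x = (v * deriv g (h t) * h x - ε) * φ x := by
      linarith [hφeq x]
    have e2 : deriv (deriv ψ) x = (v * f x - E) * ψ x := by
      linarith [hψeq x]
    have hp := mul_pos (hψpos x) (hφpos x)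
    have hb := mul_le_mul_of_nonneg_left (htan (h x)) hv.le
    have hfx : f x = g (h x) := by rw [hf]; rfl
    have hneg : E - ε + v * deriv g (h t) * h x - v * f x < 0 := by
      rw [hfx]
      linarith
    have := mul_neg_of_pos_of_neg hp hneg
    rw [e1, e2]
    linarith
  have a1 := hanti.antitone.le_of_tendsto hWtop 1
  have a2 := hanti.antitone.ge_of_tendsto hWbot 0
  have a3 := hanti (zero_lt_one (α := ℝ))
  exact absurd a3 (not_lt.2 (a2.trans a1))
end

section
/- Let F : ℝ → ℝ be twice differentiable on (0, ∞) with F'' continuous and F''(v) < 0 for all v > 0, and define s : (0, ∞) → ℝ by s(v) = F(v) − v·F'(v). Let σ : ℝ → ℝ satisfy σ(s(v)) = v for all v > 0 and s(σ(y)) = y for all y in the image s((0,∞)), with σ continuous on s((0,∞)). Then the function f̄ = F' ∘ σ is twice differentiable at s(v₀) for each v₀ > 0, and its second derivative satisfies F''(v₀)·f̄''(s(v₀)) = −1/v₀³; in particular f̄''(s(v₀)) > 0, so f̄ is convex on s((0,∞)). -/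
/-- Second-derivative Legendre relation for kinetic potentials: with
`s(v) = F(v) − v·F'(v)` for a concave eigenvalue function `F` (`F'' < 0`,
`F''` continuous) and `σ` the inverse of `s`, the kinetic potential
`f̄ = F' ∘ σ` is twice differentiable at each `s(v₀)`, `v₀ > 0`, with
`F''(v₀)·f̄''(s(v₀)) = −1/v₀³`; in particular `f̄''(s(v₀)) > 0` and `f̄` is
convex on `s((0,∞))`. -/
theorem kinetic_potential_convexity
    (F : ℝ → ℝ)
    (hF1 : ∀ v ∈ Set.Ioi (0 : ℝ), DifferentiableAt ℝ F v)
    (hF2 : ∀ v ∈ Set.Ioi (0 : ℝ), DifferentiableAt ℝ (deriv F) v)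
    (hF''cont : ContinuousOn (deriv (deriv F)) (Set.Ioi 0))
    (hF'' : ∀ v ∈ Set.Ioi (0 : ℝ), deriv (deriv F) v < 0)
    (s : ℝ → ℝ) (hs : ∀ v ∈ Set.Ioi (0 : ℝ), s v = F v - v * deriv F v)
    (σ : ℝ → ℝ)
    (hσ1 : ∀ v ∈ Set.Ioi (0 : ℝ), σ (s v) = v)
    (hσ2 : ∀ y ∈ s '' Set.Ioi 0, s (σ y) = y)
    (hσc : ContinuousOn σ (s '' Set.Ioi 0)) :
    (∀ v₀ ∈ Set.Ioi (0 : ℝ),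
      DifferentiableAt ℝ (fun y => deriv F (σ y)) (s v₀) ∧
      DifferentiableAt ℝ (deriv (fun y => deriv F (σ y))) (s v₀) ∧
      deriv (deriv F) v₀ * deriv (deriv (fun y => deriv F (σ y))) (s v₀)
        = -1 / v₀ ^ 3 ∧
      0 < deriv (deriv (fun y => deriv F (σ y))) (s v₀)) ∧
    ConvexOn ℝ (s '' Set.Ioi 0) (fun y => deriv F (σ y)) := by
  have hsd : ∀ v ∈ Set.Ioi (0 : ℝ), HasDerivAt s (-(v * deriv (deriv F) v)) v := by
    intro v hv
    have h1 := (hF1 v hv).hasDerivAt.sub ((hasDerivAt_id v).mul (hF2 v hv).hasDerivAt)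
    have h2 : HasDerivAt (fun v => F v - v * deriv F v) (-(v * deriv (deriv F) v)) v := by
      refine h1.congr_deriv ?_
      simp
    refine h2.congr_of_eventuallyEq ?_
    filter_upwards [isOpen_Ioi.mem_nhds hv] with x hx using hs x hx
  have hne : ∀ v ∈ Set.Ioi (0 : ℝ), -(v * deriv (deriv F) v) ≠ 0 := by
    intro v hv
    exact neg_ne_zero.mpr (mul_ne_zero (ne_of_gt hv) (hF'' v hv).ne)
  have hnhds : ∀ v ∈ Set.Ioi (0 : ℝ), s '' Set.Ioi 0 ∈ nhds (s v) := by
    intro v hv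
    have hc : ContinuousAt (fun v => -(v * deriv (deriv F) v)) v :=
      (continuousAt_id.mul (hF''cont.continuousAt (isOpen_Ioi.mem_nhds hv))).neg
    have hst : HasStrictDerivAt s (-(v * deriv (deriv F) v)) v := by
      refine hasStrictDerivAt_of_hasDerivAt_of_continuousAt
        (f' := fun v => -(v * deriv (deriv F) v)) ?_ hc
      filter_upwards [isOpen_Ioi.mem_nhds hv] with x hx using hsd x hx
    rw [← hst.map_nhds_eq (hne v hv)]
    exact Filter.image_mem_map (isOpen_Ioi.mem_nhds hv)
  have hσd : ∀ v ∈ Set.Ioi (0 : ℝ), HasDerivAt σ (-(v * deriv (deriv F) v))⁻¹ (s v) := by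
    intro v hv
    refine HasDerivAt.of_local_left_inverse (f := s) (hσc.continuousAt (hnhds v hv)) ?_ (hne v hv) ?_
    · rw [hσ1 v hv]; exact hsd v hv
    · filter_upwards [hnhds v hv] with y hy using hσ2 y hy
  have hfd : ∀ v ∈ Set.Ioi (0 : ℝ), HasDerivAt (fun y => deriv F (σ y)) (-(σ (s v))⁻¹) (s v) := by
    intro v hv
    have h1 : HasDerivAt (deriv F) (deriv (deriv F) v) (σ (s v)) := by
      rw [hσ1 v hv]; exact (hF2 v hv).hasDerivAt
    refine (h1.comp (s v) (hσd v hv)).congr_deriv ?_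
    rw [hσ1 v hv]
    have := (hF'' v hv).ne
    have : v ≠ 0 := ne_of_gt hv
    field_simp
  have hfdd : ∀ v ∈ Set.Ioi (0 : ℝ), HasDerivAt (deriv (fun y => deriv F (σ y)))
      (-(v ^ 3 * deriv (deriv F) v)⁻¹) (s v) := by
    intro v hv
    have hF0 := (hF'' v hv).ne
    have hv0 : v ≠ 0 := ne_of_gt hv
    have h1 : HasDerivAt (fun y => -(σ y)⁻¹) (-(v ^ 3 * deriv (deriv F) v)⁻¹) (s v) := by
      refine ((hσd v hv).fun_inv (by rw [hσ1 v hv]; exact hv0)).fun_neg.congr_deriv ?_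
      rw [hσ1 v hv]
      field_simp
    refine h1.congr_of_eventuallyEq ?_
    filter_upwards [hnhds v hv] with y hy
    obtain ⟨x, hx, rfl⟩ := hy
    exact (hfd x hx).deriv
  have hpos : ∀ v ∈ Set.Ioi (0 : ℝ), 0 < deriv (deriv (fun y => deriv F (σ y))) (s v) := by
    intro v hv
    rw [(hfdd v hv).deriv]
    have h3 : 0 < v ^ 3 := pow_pos hv 3
    exact neg_pos.mpr (inv_lt_zero.mpr (mul_neg_of_pos_of_neg h3 (hF'' v hv)))
  refine ⟨fun v hv => ⟨(hfd v hv).differentiableAt, (hfdd v hv).differentiableAt, ?_, hpos v hv⟩, ?_⟩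
  · rw [(hfdd v hv).deriv]
    have hF0 := (hF'' v hv).ne
    have hv0 : v ≠ 0 := ne_of_gt hv
    field_simp
  · have hconv : Convex ℝ (s '' Set.Ioi 0) := by
      refine Set.OrdConnected.convex (IsPreconnected.ordConnected ?_)
      exact isPreconnected_Ioi.image s fun v hv => (hsd v hv).continuousAt.continuousWithinAt
    refine convexOn_of_deriv2_nonneg hconv ?_ ?_ ?_ ?_
    · rintro _ ⟨v, hv, rfl⟩
      exact (hfd v hv).continuousAt.continuousWithinAt
    · intro y hy
      obtain ⟨v, hv, rfl⟩ := interior_subset hy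
      exact (hfd v hv).differentiableAt.differentiableWithinAt
    · intro y hy
      obtain ⟨v, hv, rfl⟩ := interior_subset hy
      exact (hfdd v hv).differentiableAt.differentiableWithinAt
    · intro y hy
      obtain ⟨v, hv, rfl⟩ := interior_subset hy
      exact (hpos v hv).le
end
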